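/- Let c₁, c₂, c₃ ∈ 𝔽_p and N(c₁,c₂,c₃) = #{(a,b) ∈ 𝔽_q × 𝔽_q : Tr(a²) = c₁, Tr(b²) = c₂ and Tr(ab) = c₃}. If m is odd, then (as complex numbers): N = p^{2m−3} + p^{m−3}(p−1)(2p−1) − p^{−4}(p−1)²G²Ḡ² if c₁ = c₂ = c₃ = 0; N = p^{2m−3} − p^{m−3}(2p−1) + p^{−4}(p−1)G²Ḡ² if c₁ = c₂ = 0 and c₃ ≠ 0; N = p^{2m−3} + p^{m−3}(p−1)² + p^{−4}(p−1)G²Ḡ² + p^{m−2}η̄(−c₂)GḠ if c₂ ≠ 0 and c₁ = c₃ = 0; N = p^{2m−3} + p^{m−3}(p−1)² + p^{−4}(p−1)G²Ḡ² + p^{m−2}η̄(−c₁)GḠ if c₁ ≠ 0 and c₂ = c₃ = 0; N = p^{2m−3} − p^{m−3}(p−1) − p^{−4}G²Ḡ² if exactly two of c₁, c₂, c₃ are nonzero; N = p^{2m−3} + p^{m−3} + p^{−4}(p²−p−1)G²Ḡ² + p^{m−3}(η̄(−c₁)(p−1) + η̄(−c₂))GḠ if all c_i ≠ 0 and c₃²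 − c₁c₂ = 0; and N = p^{2m−3} + p^{m−3} − p^{−4}(p+1)G²Ḡ² if all c_i ≠ 0 and c₃² − c₁c₂ ≠ 0. -/

import Mathlib

open Finset
open scoped Classical

noncomputable section

/-- `ζ_p = exp(2πi/p)`. -/
def zeta (p : ℕ) : ℂ := Complex.exp (2 * Real.pi * Complex.I / p)

/-- The canonical additive character of `ℤ/p`: `χ̄₁(c) = ζ_p^c`. -/
def chiBar (p : ℕ) (c : ZMod p) : ℂ := zeta p ^ c.val

/-- The quadratic character of `(ℤ/p)^*`, extended by `η̄(0) = 0`. -/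
def etaBar (p : ℕ) (c : ZMod p) : ℂ :=
  if c = 0 then 0 else if IsSquare c then 1 else -1

/-- The quadratic character of `F^*`, extended by `η(0) = 0`. -/
def etaQ (F : Type) [Field F] (x : F) : ℂ :=
  if x = 0 then 0 else if IsSquare x then 1 else -1

/-- The absolute trace map from `F` to `ℤ/p`. -/
def Trq (p : ℕ) (F : Type) [Field F] [Algebra (ZMod p) F] (x : F) : ZMod p :=
  Algebra.trace (ZMod p) F x

/-- The canonical additive character of `F`: `χ₁(x) = ζ_p^{Tr x}`. -/
def chiQ (p : ℕ) (F : Type) [Field F] [Algebra (ZMod p) F] (x : F) : ℂ :=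
  chiBar p (Trq p F x)

/-- The quadratic Gauss sum `G` over `F`. -/
def GaussQ (p : ℕ) (F : Type) [Field F] [Fintype F] [Algebra (ZMod p) F] : ℂ :=
  ∑ x ∈ univ.filter (fun x : F => x ≠ 0), etaQ F x * chiQ p F x

/-- The quadratic Gauss sum `Ḡ` over `ℤ/p`. -/
def GaussP (p : ℕ) [NeZero p] : ℂ :=
  ∑ y ∈ univ.filter (fun y : ZMod p => y ≠ 0), etaBar p y * chiBar p y

/-! Let `B` be a nondegenerate symmetric bilinear form on a space `V` of odd dimension over a finite
field `k` of odd characteristic; the trace form of `F` is the case at hand. The pairs `(a, b)` to be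
counted are those with a prescribed Gram matrix. For fixed `b`, detect the conditions `B a a = c₁`
and `B a b = c₃` by additive characters of `k`. Where the first character is trivial, only `B a b`
matters, which is equidistributed unless `b = 0`; where it is not, completing the square in `a`
leaves the Gauss sum `E` of the form `B` times a sum that depends on `b` only through `B b b = c₂`.
The number of such `b` comes from detecting `B b b = c₂` in the same way. In odd dimension, scaling
`B` by `t` multiplies `E` by the quadratic character of `t`, and `(E * Ḡ) ^ 2 = |k| * |V|`, so the
count takes only two shapes, according to whether `c₃ ^ 2 - c₁ * c₂` vanishes. Finally, the Gauss
sum `G` over `F` is `E` for the trace form, since `∑ ψ(x ^ 2) = ∑ η(x) ψ(x)`. -/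

section QuadraticCharacter

variable {k R : Type*} [Field k] [Fintype k] [DecidableEq k] [CommRing R]

variable (k R) in
/-- The quadratic character of a finite field `k`, with values in `R` instead of `ℤ`. -/
def quadChar : MulChar k R := (quadraticChar k).ringHomComp (Int.castRingHom R)

theorem quadChar_apply (x : k) {_ : Decidable (IsSquare x)} :
    quadChar k R x = if x = 0 then 0 else if IsSquare x then 1 else -1 := by
  simp only [quadChar, MulChar.ringHomComp_apply, quadraticChar_apply, quadraticCharFun]
  split_ifs <;> simp

theorem quadChar_isQuadratic : (quadChar k R).IsQuadratic :=
  (quadraticChar_isQuadratic k).comp _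

theorem quadChar_ne_one [CharZero R] (hk : ringChar k ≠ 2) : quadChar k R ≠ 1 :=
  (MulChar.ringHomComp_ne_one_iff (RingHom.injective_int _)).mpr (quadraticChar_ne_one hk)

theorem quadChar_sq_eq_one {t : k} (ht : t ≠ 0) : quadChar k R t ^ 2 = 1 := by
  simpa [quadChar] using congrArg (Int.cast : ℤ → R) (quadraticChar_sq_one ht)

theorem quadChar_eq_of_mul_eq_sq {s t u : k} (hu : u ≠ 0) (h : s * t = u ^ 2) :
    quadChar k R s = quadChar k R t := by
  have ht : t ≠ 0 := right_ne_zero_of_mul (h ▸ pow_ne_zero 2 hu)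
  have hst : quadChar k R s * quadChar k R t = 1 := by
    rw [← map_mul, h, map_pow, quadChar_sq_eq_one hu]
  linear_combination quadChar k R t * hst - quadChar k R s * quadChar_sq_eq_one (R := R) ht

theorem card_sqrts_eq_quadChar_add_one (hk : ringChar k ≠ 2) (u : k) :
    (#{x : k | x ^ 2 = u} : R) = quadChar k R u + 1 := by
  simpa [quadChar] using congrArg (Int.cast : ℤ → R) (quadraticChar_card_sqrts hk u)

theorem gaussSum_quadChar_eq_sum_ne_zero (ψ : AddChar k R) :
    gaussSum (quadChar k R) ψ = ∑ x with x ≠ 0, quadChar k R x * ψ x :=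
  (sum_filter_of_ne fun x _ hx => by rintro rfl; simp [MulChar.map_zero] at hx).symm

end QuadraticCharacter

section CharacterSums

variable {k R : Type*} [Field k] [CommRing R] [IsDomain R] {ψ : AddChar k R}

theorem addChar_sum {A M ι : Type*} [AddCommMonoid A] [CommMonoid M] (ψ : AddChar A M)
    (s : Finset ι) (f : ι → A) : ψ (∑ i ∈ s, f i) = ∏ i ∈ s, ψ (f i) :=
  map_prod ψ.toMonoidHom (fun i => Multiplicative.ofAdd (f i)) s

variable [Fintype k] [DecidableEq k]

theorem card_mul_sum_filter_eq {α : Type*} (hψ : ψ.IsPrimitive) (s : Finset α) (f : α → k) (c : k)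
    (w : α → R) :
    Fintype.card k * ∑ v ∈ s with f v = c, w v = ∑ x, ψ (-c * x) * ∑ v ∈ s, ψ (x * f v) * w v := by
  have detect (v : α) : ∑ x, ψ (x * (f v - c)) = if f v = c then (Fintype.card k : R) else 0 := by
    rw [AddChar.sum_mulShift _ hψ]
    simp [sub_eq_zero]
  calc (Fintype.card k : R) * ∑ v ∈ s with f v = c, w v
      = ∑ v ∈ s, ∑ x, ψ (x * (f v - c)) * w v := by
        simp only [← sum_mul, detect, ite_mul, zero_mul, ← sum_filter, mul_sum]
    _ = ∑ x, ψ (-c * x) * ∑ v ∈ s, ψ (x * f v) * w v := by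
        rw [sum_comm]
        refine sum_congr rfl fun x _ => ?_
        rw [mul_sum]
        refine sum_congr rfl fun v _ => ?_
        rw [← mul_assoc, ← AddChar.map_add_eq_mul]
        ring_nf

theorem gaussSum_quadChar_mulShift [CharZero R] (hk : ringChar k ≠ 2) (ψ : AddChar k R) (t : k) :
    gaussSum (quadChar k R) (ψ.mulShift t) = quadChar k R t * gaussSum (quadChar k R) ψ := by
  rcases eq_or_ne t 0 with rfl | ht
  · rw [AddChar.mulShift_zero, gaussSum_one_right (quadChar_ne_one hk), MulChar.map_zero, zero_mul]
  · simpa [quadChar_isQuadratic.inv] using gaussSum_mulShift_eq (quadChar k R) ψ (Units.mk0 t ht)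

theorem sum_addChar_mul_sq (hk : ringChar k ≠ 2) (hψ : ψ.IsPrimitive) {t : k} (ht : t ≠ 0) :
    ∑ x, ψ (t * x ^ 2) = quadChar k R t * gaussSum (quadChar k R) ψ := by
  calc ∑ x, ψ (t * x ^ 2)
      = ∑ u, ∑ x with x ^ 2 = u, ψ (t * u) := by
        rw [← sum_fiberwise univ fun x : k => x ^ 2]
        exact sum_congr rfl fun u _ => sum_congr rfl fun x hx => by rw [(mem_filter.mp hx).2]
    _ = ∑ u, quadChar k R u * ψ (t * u) + ∑ u, ψ (u * t) := by
        simp only [sum_const, nsmul_eq_mul, card_sqrts_eq_quadChar_add_one hk, add_mul, one_mul,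
          sum_add_distrib, mul_comm t]
    _ = gaussSum (quadChar k R) (ψ.mulShift (Units.mk0 t ht)) := by
        simp [AddChar.sum_mulShift t hψ, ht, gaussSum, AddChar.mulShift_apply]
    _ = quadChar k R t * gaussSum (quadChar k R) ψ := by
        rw [gaussSum_mulShift_eq, quadChar_isQuadratic.inv, Units.val_mk0]

theorem sum_addChar_quadratic (hk : ringChar k ≠ 2) (hψ : ψ.IsPrimitive) {t : k} (ht : t ≠ 0)
    (u v : k) : ∑ x, ψ (t * x ^ 2 + u * x + v) =
      ψ (v - u ^ 2 / (4 * t)) * (quadChar k R t * gaussSum (quadChar k R) ψ) := by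
  have h2 : (2 : k) ≠ 0 := Ring.two_ne_zero hk
  rw [← sum_addChar_mul_sq hk hψ ht, ← Equiv.sum_comp (Equiv.subRight (u / (2 * t))), mul_sum]
  refine sum_congr rfl fun x _ => ?_
  rw [← AddChar.map_add_eq_mul, show (4 : k) = 2 * 2 by norm_num, Equiv.subRight_apply]
  congr 1
  field

end CharacterSums

section FormGaussSum

variable {k V R : Type*} [Field k] [AddCommGroup V] [Module k V] [Fintype V] [CommRing R]
  {B : LinearMap.BilinForm k V}

/-- The quadratic Gauss sum `∑ᵥ ψ(B(v, v))` of a bilinear form `B` on a finite vector space. -/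
def formGaussSum (ψ : AddChar k R) (B : LinearMap.BilinForm k V) : R := ∑ v, ψ (B v v)

theorem sum_addChar_form_add_linear (hk : ringChar k ≠ 2) (ψ : AddChar k R) (hB : B.IsSymm)
    {x : k} (hx : x ≠ 0) (z : k) (b : V) :
    ∑ a, ψ (x * B a a + z * B a b) =
      ψ (-(z ^ 2 * B b b / (4 * x))) * formGaussSum (ψ.mulShift x) B := by
  have h2 : (2 : k) ≠ 0 := Ring.two_ne_zero hk
  rw [formGaussSum, ← Equiv.sum_comp (Equiv.subRight ((z / (2 * x)) • b)), mul_sum]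
  refine sum_congr rfl fun a _ => ?_
  rw [AddChar.mulShift_apply, ← AddChar.map_add_eq_mul, show (4 : k) = 2 * 2 by norm_num]
  simp only [Equiv.subRight_apply, map_sub, map_smul, LinearMap.sub_apply, LinearMap.smul_apply,
    smul_eq_mul, hB.eq b a]
  congr 1
  field

variable [Fintype k]

theorem exists_formGaussSum_eq_prod (hk : ringChar k ≠ 2) (hB : B.IsSymm) (hB' : B.Nondegenerate) :
    ∃ w : Fin (Module.finrank k V) → kˣ, ∀ ψ : AddChar k R,
      formGaussSum ψ B = ∏ i, ∑ x, ψ (w i * x ^ 2) := by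
  have : Invertible (2 : k) := invertibleOfNonzero (Ring.two_ne_zero hk)
  have hassoc : QuadraticMap.associated B.toQuadraticMap = B :=
    QuadraticMap.associated_left_inverse k hB.eq
  obtain ⟨w, ⟨φ⟩⟩ := QuadraticForm.equivalent_weightedSumSquares_units_of_nondegenerate'
    B.toQuadraticMap (hassoc.symm ▸ hB'.1)
  refine ⟨w, fun ψ => ?_⟩
  rw [Fintype.prod_sum, formGaussSum]
  refine Fintype.sum_equiv φ.toEquiv _ _ fun v => ?_
  have hv : B v v = ∑ i, w i * φ v i ^ 2 := by
    have hφ := φ.map_app v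
    rw [QuadraticMap.weightedSumSquares_apply] at hφ
    simpa only [Units.smul_def, smul_eq_mul, sq, LinearMap.BilinMap.toQuadraticMap_apply]
      using hφ.symm
  rw [hv, addChar_sum]
  rfl

variable [DecidableEq k] [IsDomain R] {ψ : AddChar k R}

theorem formGaussSum_mulShift (hk : ringChar k ≠ 2) (hψ : ψ.IsPrimitive) (hB : B.IsSymm)
    (hB' : B.Nondegenerate) {t : k} (ht : t ≠ 0) :
    formGaussSum (ψ.mulShift t) B = quadChar k R t ^ Module.finrank k V * formGaussSum ψ B := by
  obtain ⟨w, hw⟩ := exists_formGaussSum_eq_prod (R := R) hk hB hB'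
  rw [hw, hw, ← Fin.prod_const, ← prod_mul_distrib]
  refine prod_congr rfl fun i _ => ?_
  simp only [AddChar.mulShift_apply, ← mul_assoc]
  rw [sum_addChar_mul_sq hk hψ (mul_ne_zero ht (w i).ne_zero),
    sum_addChar_mul_sq hk hψ (w i).ne_zero, map_mul, mul_assoc]

theorem formGaussSum_sq [CharZero R] (hk : ringChar k ≠ 2) (hψ : ψ.IsPrimitive) (hB : B.IsSymm)
    (hB' : B.Nondegenerate) :
    formGaussSum ψ B ^ 2 = (quadChar k R (-1) * Fintype.card k) ^ Module.finrank k V := by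
  obtain ⟨w, hw⟩ := exists_formGaussSum_eq_prod (R := R) hk hB hB'
  rw [hw, ← prod_pow, ← Fin.prod_const]
  refine prod_congr rfl fun i _ => ?_
  rw [sum_addChar_mul_sq hk hψ (w i).ne_zero, mul_pow, quadChar_sq_eq_one (w i).ne_zero, one_mul,
    gaussSum_sq (quadChar_ne_one hk) quadChar_isQuadratic hψ]

theorem formGaussSum_mulShift_of_odd (hk : ringChar k ≠ 2) (hψ : ψ.IsPrimitive) (hB : B.IsSymm)
    (hB' : B.Nondegenerate) (hV : Odd (Module.finrank k V)) {t : k} (ht : t ≠ 0) :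
    formGaussSum (ψ.mulShift t) B = quadChar k R t * formGaussSum ψ B := by
  rw [formGaussSum_mulShift hk hψ hB hB' ht, ← MulChar.pow_apply' _ hV.pos.ne',
    quadChar_isQuadratic.pow_odd hV]

theorem sq_formGaussSum_mul_gaussSum_of_odd [CharZero R] (hk : ringChar k ≠ 2)
    (hψ : ψ.IsPrimitive) (hB : B.IsSymm) (hB' : B.Nondegenerate)
    (hV : Odd (Module.finrank k V)) :
    (formGaussSum ψ B * gaussSum (quadChar k R) ψ) ^ 2 = Fintype.card k * Fintype.card V := by
  have hone : quadChar k R (-1) ^ (Module.finrank k V + 1) = 1 := by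
    rw [← map_pow, hV.add_one.neg_one_pow, map_one]
  rw [mul_pow, formGaussSum_sq hk hψ hB hB',
    gaussSum_sq (quadChar_ne_one hk) quadChar_isQuadratic hψ, ← pow_succ, mul_pow, hone, one_mul,
    Module.card_eq_pow_finrank (K := k) (V := V), Nat.cast_pow, pow_succ']

end FormGaussSum

theorem card_mul_card_fiber {k V : Type*} [Field k] [Fintype k] [DecidableEq k] [AddCommGroup V]
    [Module k V] [Fintype V] {f : V →ₗ[k] k} (hf : f ≠ 0) (c : k) :
    Fintype.card k * #{v | f v = c} = Fintype.card V := by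
  have hfiber (d : k) : #{v | f v = d} = #{v | f v = c} :=
    AddMonoidHom.card_fiber_eq_of_mem_range f.toAddMonoidHom (LinearMap.surjective hf d)
      (LinearMap.surjective hf c)
  have htotal := card_eq_sum_card_fiberwise (s := univ) (t := univ) fun v _ => mem_univ (f v)
  simpa only [hfiber, sum_const, card_univ, smul_eq_mul] using htotal.symm

section Counting

variable {k V R : Type*} [Field k] [DecidableEq k] [AddCommGroup V] [Module k V] [Fintype V]

/-- The number of pairs `(a, b)` of vectors with Gram matrix `!![c₁, c₃; c₃, c₂]` with respect to
the bilinear form `B`. -/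
def gramCount (B : LinearMap.BilinForm k V) (c₁ c₂ c₃ : k) : ℕ :=
  #{ab : V × V | B ab.1 ab.1 = c₁ ∧ B ab.2 ab.2 = c₂ ∧ B ab.1 ab.2 = c₃}

theorem gramCount_eq_sum (B : LinearMap.BilinForm k V) (c₁ c₂ c₃ : k) :
    gramCount B c₁ c₂ c₃ = ∑ b with B b b = c₂, #{a | B a a = c₁ ∧ B a b = c₃} := by
  simp only [gramCount, card_filter, sum_filter, Fintype.sum_prod_type_right]
  refine sum_congr rfl fun b _ => ?_
  split_ifs with hb <;> simp [hb]

variable [Fintype k] [CommRing R] {B : LinearMap.BilinForm k V}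

theorem card_mul_card_apply_eq (hB' : B.Nondegenerate) (b : V) (c : k) :
    (Fintype.card k : R) * #{a | B a b = c} = Fintype.card V +
      if b = 0 then (Fintype.card V : R) * ((if c = 0 then (Fintype.card k : R) else 0) - 1)
      else 0 := by
  split_ifs with hb hc
  · simp only [hb, map_zero, hc, filter_true, card_univ]
    ring
  · simp [hb, Ne.symm hc]
  · have hne : B.flip b ≠ 0 := fun h => hb (hB'.2 b fun a => LinearMap.congr_fun h a)
    rw [add_zero, ← card_mul_card_fiber hne c, Nat.cast_mul]
    rfl

/-- The sum over `x` and `z` left after the sum over `a` in the count of the `a` with `B a a = c₁`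
and `B a b = c₃`, for a fixed `b` with `B b b = c₂`. The summand at `x = 0` vanishes because
`quadChar k R 0 = 0`, so the division by `4 * x` is harmless. -/
def fiberSum (ψ : AddChar k R) (c₁ c₂ c₃ : k) : R :=
  ∑ x, quadChar k R x * ∑ z, ψ (-(c₂ / (4 * x)) * z ^ 2 + -c₃ * z + -(x * c₁))

variable [IsDomain R] {ψ : AddChar k R}

theorem fiberSum_of_ne_zero (hk : ringChar k ≠ 2) (hψ : ψ.IsPrimitive) (c₁ : k) {c₂ : k}
    (hc₂ : c₂ ≠ 0) (c₃ : k) :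
    fiberSum ψ c₁ c₂ c₃ = quadChar k R (-c₂) * gaussSum (quadChar k R) ψ *
      ((if c₃ ^ 2 - c₁ * c₂ = 0 then (Fintype.card k : R) else 0) - 1) := by
  have h2 : (2 : k) ≠ 0 := Ring.two_ne_zero hk
  have h4 : (4 : k) ≠ 0 := by simpa [show (4 : k) = 2 * 2 by norm_num] using h2
  have inner (x : k) (hx : x ≠ 0) :
      quadChar k R x * ∑ z, ψ (-(c₂ / (4 * x)) * z ^ 2 + -c₃ * z + -(x * c₁)) =
        quadChar k R (-c₂) * gaussSum (quadChar k R) ψ * ψ (x * (c₃ ^ 2 / c₂ - c₁)) := by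
    have hχ : quadChar k R x * quadChar k R (-(c₂ / (4 * x))) = quadChar k R (-c₂) := by
      rw [← map_mul]
      refine quadChar_eq_of_mul_eq_sq (u := c₂ / 2) (div_ne_zero hc₂ h2) ?_
      rw [show (4 : k) = 2 * 2 by norm_num]
      field
    rw [sum_addChar_quadratic hk hψ (neg_ne_zero.mpr (div_ne_zero hc₂ (mul_ne_zero h4 hx))), ← hχ,
      show -(x * c₁) - (-c₃) ^ 2 / (4 * -(c₂ / (4 * x))) = x * (c₃ ^ 2 / c₂ - c₁) by field]
    ring
  have hdet : c₃ ^ 2 / c₂ - c₁ = 0 ↔ c₃ ^ 2 - c₁ * c₂ = 0 := by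
    rw [sub_eq_zero, sub_eq_zero, div_eq_iff hc₂]
  have htotal := AddChar.sum_mulShift (c₃ ^ 2 / c₂ - c₁) hψ
  rw [Fintype.sum_eq_add_sum_compl 0, zero_mul, AddChar.map_zero_eq_one] at htotal
  rw [fiberSum, Fintype.sum_eq_add_sum_compl 0, MulChar.map_zero, zero_mul, zero_add,
    sum_congr rfl fun x hx => inner x (by simpa using hx), ← mul_sum, eq_sub_of_add_eq' htotal]
  simp only [hdet, Nat.cast_ite, Nat.cast_zero]

theorem card_sq_mul_card_section (hk : ringChar k ≠ 2) (hψ : ψ.IsPrimitive) (hB : B.IsSymm)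
    (hB' : B.Nondegenerate) (hV : Odd (Module.finrank k V)) (c₁ c₃ : k) (b : V) :
    (Fintype.card k : R) ^ 2 * #{a | B a a = c₁ ∧ B a b = c₃} =
      Fintype.card k * #{a | B a b = c₃} + formGaussSum ψ B * fiberSum ψ c₁ (B b b) c₃ := by
  have inner (x : k) (hx : x ≠ 0) :
      ∑ z, ψ (-c₃ * z) * (ψ (-c₁ * x) * ∑ a, ψ (x * B a a) * ψ (z * B a b)) = formGaussSum ψ B *
        (quadChar k R x * ∑ z, ψ (-(B b b / (4 * x)) * z ^ 2 + -c₃ * z + -(x * c₁))) := by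
    rw [mul_sum, mul_sum]
    refine sum_congr rfl fun z _ => ?_
    simp only [← AddChar.map_add_eq_mul]
    rw [sum_addChar_form_add_linear hk ψ hB hx, formGaussSum_mulShift_of_odd hk hψ hB hB' hV hx]
    simp only [AddChar.map_add_eq_mul]
    ring_nf
  have hlinear := card_mul_sum_filter_eq hψ univ (fun a => B a b) c₃ 1
  simp only [Pi.one_apply, sum_const, nsmul_eq_mul, mul_one] at hlinear
  calc (Fintype.card k : R) ^ 2 * #{a | B a a = c₁ ∧ B a b = c₃}
      = Fintype.card k * (Fintype.card k * ∑ a with B a a = c₁ ∧ B a b = c₃, 1) := by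
        rw [card_eq_sum_ones, Nat.cast_sum, Nat.cast_one, sq, mul_assoc]
    _ = ∑ x, ∑ z, ψ (-c₃ * z) * (ψ (-c₁ * x) * ∑ a, ψ (x * B a a) * ψ (z * B a b)) := by
        rw [← filter_filter, card_mul_sum_filter_eq hψ, mul_sum, sum_comm]
        refine sum_congr rfl fun z _ => ?_
        rw [mul_left_comm, card_mul_sum_filter_eq hψ, mul_sum]
        simp only [mul_one]
    _ = _ := by
        rw [Fintype.sum_eq_add_sum_compl 0, fiberSum, mul_sum,
          Fintype.sum_eq_add_sum_compl 0 (fun x => formGaussSum ψ B * _),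
          sum_congr rfl fun x hx => inner x (by simpa using hx)]
        simp [MulChar.map_zero, hlinear]

variable [CharZero R]

theorem fiberSum_zero (hk : ringChar k ≠ 2) (hψ : ψ.IsPrimitive) (c₁ c₃ : k) :
    fiberSum ψ c₁ 0 c₃ = (if c₃ = 0 then (Fintype.card k : R) else 0) *
      (quadChar k R (-c₁) * gaussSum (quadChar k R) ψ) := by
  have inner (x : k) : ∑ z, ψ (-(0 / (4 * x)) * z ^ 2 + -c₃ * z + -(x * c₁)) =
      ψ (-c₁ * x) * if c₃ = 0 then (Fintype.card k : R) else 0 := by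
    have horth := AddChar.sum_mulShift (-c₃) hψ
    simp only [zero_div, neg_zero, zero_mul, zero_add, AddChar.map_add_eq_mul, ← sum_mul,
      mul_comm (-c₃), horth, neg_eq_zero, Nat.cast_ite, Nat.cast_zero]
    rw [mul_comm, ← mul_neg, mul_comm x]
  simp only [fiberSum, inner, ← mul_assoc (quadChar k R _), ← sum_mul]
  rw [mul_comm, ← gaussSum_quadChar_mulShift hk ψ (-c₁)]
  rfl

theorem card_mul_card_sphere (hk : ringChar k ≠ 2) (hψ : ψ.IsPrimitive) (hB : B.IsSymm)
    (hB' : B.Nondegenerate) (hV : Odd (Module.finrank k V)) (c : k) :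
    (Fintype.card k : R) * #{v | B v v = c} = Fintype.card V +
      quadChar k R (-c) * (formGaussSum ψ B * gaussSum (quadChar k R) ψ) := by
  have inner (x : k) : ψ (-c * x) * ∑ v, ψ (x * B v v) * 1 =
      (if x = 0 then (Fintype.card V : R) else 0) +
        quadChar k R x * ψ (-c * x) * formGaussSum ψ B := by
    split_ifs with hx
    · simp [hx, MulChar.map_zero]
    · have hshift := formGaussSum_mulShift_of_odd hk hψ hB hB' hV hx
      simp only [formGaussSum, AddChar.mulShift_apply] at hshift ⊢
      rw [zero_add, ← sum_mul, hshift]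
      ring
  have hgauss := gaussSum_quadChar_mulShift (R := R) hk ψ (-c)
  rw [card_eq_sum_ones, Nat.cast_sum, Nat.cast_one, card_mul_sum_filter_eq hψ,
    sum_congr rfl fun x _ => inner x, sum_add_distrib, sum_ite_eq', if_pos (mem_univ _), ← sum_mul]
  simp only [gaussSum, AddChar.mulShift_apply] at hgauss ⊢
  rw [hgauss]
  ring

theorem card_cube_mul_gramCount (hk : ringChar k ≠ 2) (hψ : ψ.IsPrimitive) (hB : B.IsSymm)
    (hB' : B.Nondegenerate) (hV : Odd (Module.finrank k V)) (c₁ c₂ c₃ : k) :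
    (Fintype.card k : R) ^ 3 * gramCount B c₁ c₂ c₃ =
      (Fintype.card V + quadChar k R (-c₂) * (formGaussSum ψ B * gaussSum (quadChar k R) ψ)) *
          (Fintype.card V + formGaussSum ψ B * fiberSum ψ c₁ c₂ c₃) +
        if c₂ = 0 then (Fintype.card k : R) * (Fintype.card V *
          ((if c₃ = 0 then (Fintype.card k : R) else 0) - 1)) else 0 := by
  have inner (b : V) (hb : B b b = c₂) :
      (Fintype.card k : R) ^ 2 * #{a | B a a = c₁ ∧ B a b = c₃} =
        Fintype.card V + formGaussSum ψ B * fiberSum ψ c₁ c₂ c₃ +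
          if b = 0 then (Fintype.card V : R) *
            ((if c₃ = 0 then (Fintype.card k : R) else 0) - 1) else 0 := by
    rw [card_sq_mul_card_section hk hψ hB hB' hV, hb, card_mul_card_apply_eq hB']
    ring
  calc (Fintype.card k : R) ^ 3 * gramCount B c₁ c₂ c₃
      = Fintype.card k * ∑ b with B b b = c₂,
          (Fintype.card k : R) ^ 2 * #{a | B a a = c₁ ∧ B a b = c₃} := by
        rw [gramCount_eq_sum, Nat.cast_sum, ← mul_sum, pow_succ', mul_assoc]
    _ = _ := by
        rw [sum_congr rfl fun b hb => inner b (mem_filter.mp hb).2, sum_add_distrib, sum_const,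
          nsmul_eq_mul, mul_add, ← mul_assoc, card_mul_card_sphere hk hψ hB hB' hV]
        congr 1
        simp [eq_comm]

end Counting

section OddDimension

variable {k V R : Type*} [Field k] [Fintype k] [AddCommGroup V] [Module k V] [Fintype V]
  [Field R] [CharZero R]

theorem eq_zpow_add_of_card_cube_mul_eq {N t : R}
    (h : (Fintype.card k : R) ^ 3 * N =
      (Fintype.card V : R) ^ 2 + Fintype.card k * Fintype.card V * t) :
    N = (Fintype.card k : R) ^ (2 * (Module.finrank k V : ℤ) - 3) +
      (Fintype.card k : R) ^ ((Module.finrank k V : ℤ) - 2) * t := by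
  have hq : (Fintype.card k : R) ≠ 0 := Nat.cast_ne_zero.mpr Fintype.card_ne_zero
  refine mul_left_cancel₀ (pow_ne_zero 3 hq) ?_
  rw [h, zpow_sub₀ hq, zpow_sub₀ hq, mul_comm 2, zpow_mul, zpow_natCast,
    Module.card_eq_pow_finrank (K := k) (V := V), Nat.cast_pow]
  simp only [zpow_ofNat]
  field

variable [DecidableEq k] {ψ : AddChar k R} {B : LinearMap.BilinForm k V}

theorem gramCount_of_det_ne_zero (hk : ringChar k ≠ 2) (hψ : ψ.IsPrimitive) (hB : B.IsSymm)
    (hB' : B.Nondegenerate) (hV : Odd (Module.finrank k V)) {c₁ c₂ c₃ : k}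
    (hc : c₃ ^ 2 - c₁ * c₂ ≠ 0) :
    (gramCount B c₁ c₂ c₃ : R) =
      (Fintype.card k : R) ^ (2 * (Module.finrank k V : ℤ) - 3) -
        (Fintype.card k : R) ^ ((Module.finrank k V : ℤ) - 2) := by
  rw [sub_eq_add_neg, ← mul_neg_one]
  refine eq_zpow_add_of_card_cube_mul_eq ?_
  have hE := sq_formGaussSum_mul_gaussSum_of_odd (R := R) hk hψ hB hB' hV
  rw [card_cube_mul_gramCount hk hψ hB hB' hV]
  rcases eq_or_ne c₂ 0 with rfl | hc₂
  · have hc₃ : c₃ ≠ 0 := by rintro rfl; simp at hc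
    simp only [fiberSum_zero hk hψ, hc₃, neg_zero, MulChar.map_zero, if_true, if_false]
    ring
  · have hχ := quadChar_sq_eq_one (R := R) (neg_ne_zero.mpr hc₂)
    rw [fiberSum_of_ne_zero hk hψ _ hc₂, if_neg hc, if_neg hc₂]
    linear_combination -quadChar k R (-c₂) ^ 2 * hE - Fintype.card k * Fintype.card V * hχ

theorem gramCount_of_det_eq_zero (hk : ringChar k ≠ 2) (hψ : ψ.IsPrimitive) (hB : B.IsSymm)
    (hB' : B.Nondegenerate) (hV : Odd (Module.finrank k V)) {c₁ c₂ c₃ : k}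
    (hc : c₃ ^ 2 - c₁ * c₂ = 0) (hc₂ : c₂ ≠ 0) :
    (gramCount B c₁ c₂ c₃ : R) =
      (Fintype.card k : R) ^ (2 * (Module.finrank k V : ℤ) - 3) +
        (Fintype.card k : R) ^ ((Module.finrank k V : ℤ) - 2) * (Fintype.card k - 1 +
          quadChar k R (-c₂) * (formGaussSum ψ B * gaussSum (quadChar k R) ψ)) := by
  refine eq_zpow_add_of_card_cube_mul_eq ?_
  have hE := sq_formGaussSum_mul_gaussSum_of_odd (R := R) hk hψ hB hB' hV
  have hχ := quadChar_sq_eq_one (R := R) (neg_ne_zero.mpr hc₂)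
  rw [card_cube_mul_gramCount hk hψ hB hB' hV, fiberSum_of_ne_zero hk hψ _ hc₂, if_pos hc,
    if_neg hc₂]
  linear_combination (Fintype.card k - 1) *
    (quadChar k R (-c₂) ^ 2 * hE + Fintype.card k * Fintype.card V * hχ)

theorem gramCount_zero_zero (hk : ringChar k ≠ 2) (hψ : ψ.IsPrimitive) (hB : B.IsSymm)
    (hB' : B.Nondegenerate) (hV : Odd (Module.finrank k V)) (c₁ : k) :
    (gramCount B c₁ 0 0 : R) =
      (Fintype.card k : R) ^ (2 * (Module.finrank k V : ℤ) - 3) +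
        (Fintype.card k : R) ^ ((Module.finrank k V : ℤ) - 2) * (Fintype.card k - 1 +
          quadChar k R (-c₁) * (formGaussSum ψ B * gaussSum (quadChar k R) ψ)) := by
  refine eq_zpow_add_of_card_cube_mul_eq ?_
  rw [card_cube_mul_gramCount hk hψ hB hB' hV, fiberSum_zero hk hψ]
  simp only [neg_zero, MulChar.map_zero, if_true]
  ring

theorem zpow_mul_sq_formGaussSum_mul_gaussSum_of_odd (hk : ringChar k ≠ 2) (hψ : ψ.IsPrimitive)
    (hB : B.IsSymm) (hB' : B.Nondegenerate) (hV : Odd (Module.finrank k V)) :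
    (Fintype.card k : R) ^ (-4 : ℤ) * (formGaussSum ψ B * gaussSum (quadChar k R) ψ) ^ 2 =
      (Fintype.card k : R) ^ ((Module.finrank k V : ℤ) - 3) := by
  have hq : (Fintype.card k : R) ≠ 0 := Nat.cast_ne_zero.mpr Fintype.card_ne_zero
  rw [sq_formGaussSum_mul_gaussSum_of_odd hk hψ hB hB' hV,
    Module.card_eq_pow_finrank (K := k) (V := V), Nat.cast_pow, ← zpow_natCast, ← zpow_one_add₀ hq,
    ← zpow_add₀ hq]
  ring_nf

theorem N3_card_m_odd_general {q m : ℕ} (hk : ringChar k ≠ 2) (hq : Fintype.card k = q)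
    (hm : Module.finrank k V = m) (hmodd : Odd m) (hψ : ψ.IsPrimitive) (hB : B.IsSymm)
    (hB' : B.Nondegenerate) (c₁ c₂ c₃ : k) :
    (c₁ = 0 ∧ c₂ = 0 ∧ c₃ = 0 →
      (gramCount B c₁ c₂ c₃ : R) = (q : R) ^ (2 * (m : ℤ) - 3 : ℤ)
        + (q : R) ^ ((m : ℤ) - 3 : ℤ) * ((q : R) - 1) * (2 * (q : R) - 1)
        - (q : R) ^ (-4 : ℤ) * ((q : R) - 1) ^ 2 * formGaussSum ψ B ^ 2
          * gaussSum (quadChar k R) ψ ^ 2) ∧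
    (c₁ = 0 ∧ c₂ = 0 ∧ c₃ ≠ 0 →
      (gramCount B c₁ c₂ c₃ : R) = (q : R) ^ (2 * (m : ℤ) - 3 : ℤ)
        - (q : R) ^ ((m : ℤ) - 3 : ℤ) * (2 * (q : R) - 1)
        + (q : R) ^ (-4 : ℤ) * ((q : R) - 1) * formGaussSum ψ B ^ 2
          * gaussSum (quadChar k R) ψ ^ 2) ∧
    (c₂ ≠ 0 ∧ c₁ = 0 ∧ c₃ = 0 →
      (gramCount B c₁ c₂ c₃ : R) = (q : R) ^ (2 * (m : ℤ) - 3 : ℤ)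
        + (q : R) ^ ((m : ℤ) - 3 : ℤ) * ((q : R) - 1) ^ 2
        + (q : R) ^ (-4 : ℤ) * ((q : R) - 1) * formGaussSum ψ B ^ 2
          * gaussSum (quadChar k R) ψ ^ 2
        + (q : R) ^ ((m : ℤ) - 2 : ℤ) * quadChar k R (-c₂)
          * (formGaussSum ψ B * gaussSum (quadChar k R) ψ)) ∧
    (c₁ ≠ 0 ∧ c₂ = 0 ∧ c₃ = 0 →
      (gramCount B c₁ c₂ c₃ : R) = (q : R) ^ (2 * (m : ℤ) - 3 : ℤ)
        + (q : R) ^ ((m : ℤ) - 3 : ℤ) * ((q : R) - 1) ^ 2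
        + (q : R) ^ (-4 : ℤ) * ((q : R) - 1) * formGaussSum ψ B ^ 2
          * gaussSum (quadChar k R) ψ ^ 2
        + (q : R) ^ ((m : ℤ) - 2 : ℤ) * quadChar k R (-c₁)
          * (formGaussSum ψ B * gaussSum (quadChar k R) ψ)) ∧
    ((c₁ ≠ 0 ∧ c₂ ≠ 0 ∧ c₃ = 0) ∨ (c₁ ≠ 0 ∧ c₂ = 0 ∧ c₃ ≠ 0) ∨ (c₁ = 0 ∧ c₂ ≠ 0 ∧ c₃ ≠ 0) →
      (gramCount B c₁ c₂ c₃ : R) = (q : R) ^ (2 * (m : ℤ) - 3 : ℤ)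
        - (q : R) ^ ((m : ℤ) - 3 : ℤ) * ((q : R) - 1)
        - (q : R) ^ (-4 : ℤ) * formGaussSum ψ B ^ 2 * gaussSum (quadChar k R) ψ ^ 2) ∧
    ((c₁ ≠ 0 ∧ c₂ ≠ 0 ∧ c₃ ≠ 0) ∧ c₃ ^ 2 - c₁ * c₂ = 0 →
      (gramCount B c₁ c₂ c₃ : R) = (q : R) ^ (2 * (m : ℤ) - 3 : ℤ)
        + (q : R) ^ ((m : ℤ) - 3 : ℤ)
        + (q : R) ^ (-4 : ℤ) * ((q : R) ^ 2 - (q : R) - 1) * formGaussSum ψ B ^ 2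
          * gaussSum (quadChar k R) ψ ^ 2
        + (q : R) ^ ((m : ℤ) - 3 : ℤ)
          * (quadChar k R (-c₁) * ((q : R) - 1) + quadChar k R (-c₂))
          * (formGaussSum ψ B * gaussSum (quadChar k R) ψ)) ∧
    ((c₁ ≠ 0 ∧ c₂ ≠ 0 ∧ c₃ ≠ 0) ∧ c₃ ^ 2 - c₁ * c₂ ≠ 0 →
      (gramCount B c₁ c₂ c₃ : R) = (q : R) ^ (2 * (m : ℤ) - 3 : ℤ)
        + (q : R) ^ ((m : ℤ) - 3 : ℤ)
        - (q : R) ^ (-4 : ℤ) * ((q : R) + 1) * formGaussSum ψ B ^ 2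
          * gaussSum (quadChar k R) ψ ^ 2) := by
  subst hq hm
  have hG := zpow_mul_sq_formGaussSum_mul_gaussSum_of_odd (R := R) hk hψ hB hB' hmodd
  have hpow : (Fintype.card k : R) ^ ((Module.finrank k V : ℤ) - 2) =
      (Fintype.card k : R) ^ ((Module.finrank k V : ℤ) - 3) * Fintype.card k := by
    rw [← zpow_add_one₀ (Nat.cast_ne_zero.mpr Fintype.card_ne_zero)]
    ring_nf
  have hregular (hc : c₃ ^ 2 - c₁ * c₂ ≠ 0) :=
    gramCount_of_det_ne_zero (R := R) hk hψ hB hB' hmodd hc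
  have hsingular (hc : c₃ ^ 2 - c₁ * c₂ = 0) (hc₂ : c₂ ≠ 0) :=
    gramCount_of_det_eq_zero (R := R) hk hψ hB hB' hmodd hc hc₂
  have hzero := gramCount_zero_zero (R := R) hk hψ hB hB' hmodd
  refine ⟨?_, ?_, ?_, ?_, ?_, ?_, ?_⟩
  · rintro ⟨rfl, rfl, rfl⟩
    rw [hzero, neg_zero, MulChar.map_zero]
    linear_combination (Fintype.card k - 1) ^ 2 * hG + (Fintype.card k - 1) * hpow
  · rintro ⟨rfl, rfl, hc₃⟩
    rw [hregular (by simpa using hc₃)]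
    linear_combination (1 - Fintype.card k) * hG - hpow
  · rintro ⟨hc₂, rfl, rfl⟩
    rw [hsingular (by simp) hc₂]
    linear_combination (1 - Fintype.card k) * hG + (Fintype.card k - 1) * hpow
  · rintro ⟨-, rfl, rfl⟩
    rw [hzero]
    linear_combination (1 - Fintype.card k) * hG + (Fintype.card k - 1) * hpow
  · intro h
    rw [hregular (by rcases h with ⟨h₁, h₂, rfl⟩ | ⟨-, rfl, h₃⟩ | ⟨rfl, -, h₃⟩ <;> simp [*])]
    linear_combination hG - hpow
  · rintro ⟨⟨-, hc₂, hc₃⟩, hc⟩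
    have hχ : quadChar k R (-c₁) = quadChar k R (-c₂) :=
      quadChar_eq_of_mul_eq_sq hc₃ (by linear_combination -hc)
    rw [hsingular hc hc₂, hχ]
    linear_combination (1 + Fintype.card k - Fintype.card k ^ 2) * hG + (Fintype.card k - 1 +
      quadChar k R (-c₂) * (formGaussSum ψ B * gaussSum (quadChar k R) ψ)) * hpow
  · rintro ⟨-, hc⟩
    rw [hregular hc]
    linear_combination (Fintype.card k + 1) * hG - hpow

end OddDimension

section TraceForm

theorem finrank_eq_of_card_eq_pow {k V : Type*} [Field k] [Fintype k] [AddCommGroup V] [Module k V]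
    [Fintype V] {m : ℕ} (h : Fintype.card V = Fintype.card k ^ m) : Module.finrank k V = m :=
  Nat.pow_right_injective Fintype.one_lt_card (Module.card_eq_pow_finrank.symm.trans h)

theorem chiBar_eq_stdAddChar (p : ℕ) [NeZero p] (c : ZMod p) : chiBar p c = ZMod.stdAddChar c := by
  rw [chiBar, zeta, ← Complex.exp_nat_mul, ZMod.stdAddChar_apply, ZMod.toCircle_apply]
  ring_nf

variable {p : ℕ} [Fact p.Prime]

theorem etaBar_eq_quadChar (c : ZMod p) : etaBar p c = quadChar (ZMod p) ℂ c :=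
  (quadChar_apply c).symm

theorem GaussP_eq_gaussSum : GaussP p = gaussSum (quadChar (ZMod p) ℂ) ZMod.stdAddChar := by
  simp only [GaussP, etaBar_eq_quadChar, chiBar_eq_stdAddChar, gaussSum_quadChar_eq_sum_ne_zero]

variable {F : Type} [Field F] [Fintype F] [Algebra (ZMod p) F]

theorem etaQ_eq_quadChar (x : F) : etaQ F x = quadChar F ℂ x :=
  (quadChar_apply x).symm

theorem GaussQ_eq_formGaussSum (hp : ringChar (ZMod p) ≠ 2) :
    GaussQ p F = formGaussSum ZMod.stdAddChar (Algebra.traceForm (ZMod p) F) := by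
  let ψ : AddChar F ℂ :=
    ZMod.stdAddChar.compAddMonoidHom (Algebra.trace (ZMod p) F).toAddMonoidHom
  have hψ : ψ.IsPrimitive := by
    obtain ⟨c, hc⟩ := AddChar.ne_one_iff.mp (ZMod.isPrimitive_stdAddChar p one_ne_zero)
    obtain ⟨x, rfl⟩ := Algebra.trace_surjective (ZMod p) F c
    exact .of_ne_one (AddChar.ne_one_iff.mpr ⟨x, fun h => hc (by simpa [ψ] using h)⟩)
  calc GaussQ p F = gaussSum (quadChar F ℂ) ψ := by
        simp only [GaussQ, chiQ, chiBar_eq_stdAddChar, gaussSum_quadChar_eq_sum_ne_zero,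
          etaQ_eq_quadChar]
        rfl
    _ = ∑ x, ψ (1 * x ^ 2) := by
        rw [sum_addChar_mul_sq (Algebra.ringChar_eq (ZMod p) F ▸ hp) hψ one_ne_zero, map_one,
          one_mul]
    _ = formGaussSum ZMod.stdAddChar (Algebra.traceForm (ZMod p) F) := by
        simp only [one_mul, sq]
        rfl

theorem card_filter_Trq_eq_gramCount (c₁ c₂ c₃ : ZMod p) :
    #{ab : F × F | Trq p F (ab.1 ^ 2) = c₁ ∧ Trq p F (ab.2 ^ 2) = c₂ ∧
      Trq p F (ab.1 * ab.2) = c₃} = gramCount (Algebra.traceForm (ZMod p) F) c₁ c₂ c₃ := by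
  simp only [gramCount, Trq, Algebra.traceForm_apply, sq]
  congr!

end TraceForm

theorem N3_card_m_odd (p m : ℕ) [Fact (Nat.Prime p)] (hp : Odd p)
    (F : Type) [Field F] [Fintype F] [Algebra (ZMod p) F]
    (hm : 0 < m) (hq : Fintype.card F = p ^ m)
    (hmodd : Odd m) (c₁ c₂ c₃ : ZMod p) :
    (c₁ = 0 ∧ c₂ = 0 ∧ c₃ = 0 →
      (((univ.filter (fun ab : F × F =>
      Trq p F (ab.1 ^ 2) = c₁ ∧ Trq p F (ab.2 ^ 2) = c₂ ∧
        Trq p F (ab.1 * ab.2) = c₃)).card : ℕ) : ℂ) = (p : ℂ) ^ (2 * (m : ℤ) - 3 : ℤ) + (p : ℂ) ^ ((m : ℤ) - 3 : ℤ) * ((p : ℂ) - 1) * (2 * (p : ℂ) - 1) - (p : ℂ) ^ (-4 : ℤ) * ((p : ℂ) - 1) ^ 2 * (GaussQ p F) ^ 2 * (GaussP p) ^ 2) ∧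
    (c₁ = 0 ∧ c₂ = 0 ∧ c₃ ≠ 0 →
      (((univ.filter (fun ab : F × F =>
      Trq p F (ab.1 ^ 2) = c₁ ∧ Trq p F (ab.2 ^ 2) = c₂ ∧
        Trq p F (ab.1 * ab.2) = c₃)).card : ℕ) : ℂ) = (p : ℂ) ^ (2 * (m : ℤ) - 3 : ℤ) - (p : ℂ) ^ ((m : ℤ) - 3 : ℤ) * (2 * (p : ℂ) - 1) + (p : ℂ) ^ (-4 : ℤ) * ((p : ℂ) - 1) * (GaussQ p F) ^ 2 * (GaussP p) ^ 2) ∧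
    (c₂ ≠ 0 ∧ c₁ = 0 ∧ c₃ = 0 →
      (((univ.filter (fun ab : F × F =>
      Trq p F (ab.1 ^ 2) = c₁ ∧ Trq p F (ab.2 ^ 2) = c₂ ∧
        Trq p F (ab.1 * ab.2) = c₃)).card : ℕ) : ℂ) = (p : ℂ) ^ (2 * (m : ℤ) - 3 : ℤ) + (p : ℂ) ^ ((m : ℤ) - 3 : ℤ) * ((p : ℂ) - 1) ^ 2 + (p : ℂ) ^ (-4 : ℤ) * ((p : ℂ) - 1) * (GaussQ p F) ^ 2 * (GaussP p) ^ 2 + (p : ℂ) ^ ((m : ℤ) - 2 : ℤ) * etaBar p (-c₂) * (GaussQ p F * GaussP p)) ∧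
    (c₁ ≠ 0 ∧ c₂ = 0 ∧ c₃ = 0 →
      (((univ.filter (fun ab : F × F =>
      Trq p F (ab.1 ^ 2) = c₁ ∧ Trq p F (ab.2 ^ 2) = c₂ ∧
        Trq p F (ab.1 * ab.2) = c₃)).card : ℕ) : ℂ) = (p : ℂ) ^ (2 * (m : ℤ) - 3 : ℤ) + (p : ℂ) ^ ((m : ℤ) - 3 : ℤ) * ((p : ℂ) - 1) ^ 2 + (p : ℂ) ^ (-4 : ℤ) * ((p : ℂ) - 1) * (GaussQ p F) ^ 2 * (GaussP p) ^ 2 + (p : ℂ) ^ ((m : ℤ) - 2 : ℤ) * etaBar p (-c₁) * (GaussQ p F * GaussP p)) ∧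
    ((c₁ ≠ 0 ∧ c₂ ≠ 0 ∧ c₃ = 0) ∨ (c₁ ≠ 0 ∧ c₂ = 0 ∧ c₃ ≠ 0) ∨ (c₁ = 0 ∧ c₂ ≠ 0 ∧ c₃ ≠ 0) →
      (((univ.filter (fun ab : F × F =>
      Trq p F (ab.1 ^ 2) = c₁ ∧ Trq p F (ab.2 ^ 2) = c₂ ∧
        Trq p F (ab.1 * ab.2) = c₃)).card : ℕ) : ℂ) = (p : ℂ) ^ (2 * (m : ℤ) - 3 : ℤ) - (p : ℂ) ^ ((m : ℤ) - 3 : ℤ) * ((p : ℂ) - 1) - (p : ℂ) ^ (-4 : ℤ) * (GaussQ p F) ^ 2 * (GaussP p) ^ 2) ∧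
    ((c₁ ≠ 0 ∧ c₂ ≠ 0 ∧ c₃ ≠ 0) ∧ c₃ ^ 2 - c₁ * c₂ = 0 →
      (((univ.filter (fun ab : F × F =>
      Trq p F (ab.1 ^ 2) = c₁ ∧ Trq p F (ab.2 ^ 2) = c₂ ∧
        Trq p F (ab.1 * ab.2) = c₃)).card : ℕ) : ℂ) = (p : ℂ) ^ (2 * (m : ℤ) - 3 : ℤ) + (p : ℂ) ^ ((m : ℤ) - 3 : ℤ) + (p : ℂ) ^ (-4 : ℤ) * ((p : ℂ) ^ 2 - (p : ℂ) - 1) * (GaussQ p F) ^ 2 * (GaussP p) ^ 2 + (p : ℂ) ^ ((m : ℤ) - 3 : ℤ) * (etaBar p (-c₁) * ((p : ℂ) - 1) + etaBar p (-c₂)) * (GaussQ p F * GaussP p)) ∧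
    ((c₁ ≠ 0 ∧ c₂ ≠ 0 ∧ c₃ ≠ 0) ∧ c₃ ^ 2 - c₁ * c₂ ≠ 0 →
      (((univ.filter (fun ab : F × F =>
      Trq p F (ab.1 ^ 2) = c₁ ∧ Trq p F (ab.2 ^ 2) = c₂ ∧
        Trq p F (ab.1 * ab.2) = c₃)).card : ℕ) : ℂ) = (p : ℂ) ^ (2 * (m : ℤ) - 3 : ℤ) + (p : ℂ) ^ ((m : ℤ) - 3 : ℤ) - (p : ℂ) ^ (-4 : ℤ) * ((p : ℂ) + 1) * (GaussQ p F) ^ 2 * (GaussP p) ^ 2) := by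
  have hchar : ringChar (ZMod p) ≠ 2 := (ZMod.ringChar_zmod_n p).symm ▸ hp.ne_two_of_dvd_nat dvd_rfl
  have hrank : Module.finrank (ZMod p) F = m := finrank_eq_of_card_eq_pow (by rw [hq, ZMod.card])
  simpa only [card_filter_Trq_eq_gramCount, GaussQ_eq_formGaussSum hchar, GaussP_eq_gaussSum,
    etaBar_eq_quadChar] using N3_card_m_odd_general hchar (ZMod.card p) hrank hmodd
      (ZMod.isPrimitive_stdAddChar p) (Algebra.traceForm_isSymm (ZMod p))
      (traceForm_nondegenerate (ZMod p) F) c₁ c₂ c₃
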